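/- Let K ⊆ ℝ be a set, n ∈ ℕ, and f ∈ C^{2n+1}(ℝ) with f|_K = 0. Then for every ε > 0 there exists g ∈ C^∞(ℝ) with g|_K = 0 and sup_{j≤n, |x|≤n} |f^{(j)}(x) - g^{(j)}(x)| < ε. (Reducedness of the spectrum of vanishing ideals: the closure of I_K^∞ in the C^n topology contains I_K^{2n+1}.) -/

import Mathlib

/-!
By Rolle's theorem, `f` vanishes to order `n` at every accumulation point of its zero set. Let `ψ`
be a smooth cutoff equal to `1` on the `δ`-neighbourhood of these points, with `i`-th derivative of
size `O(δ⁻ⁱ)`. Taylor's formula bounds `f⁽ʲ⁾` by `o(δⁿ⁻ʲ)` on the support of `ψ`, so `ψ f` is small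
in `C^n`. For compactly supported `f` only finitely many zeros lie outside that neighbourhood, and
there is a smooth `Q`, close to `f` in `C^n`, which vanishes at all of them: a mollification of `f`
corrected by finitely many bumps. Then `g = (1 - ψ) Q` vanishes wherever `f` does, and
`f - g = ψ f + (1 - ψ) (f - Q)` is small. As `δ` is fixed before `Q`, the size of `ψ` does no harm.
-/

open Filter Function MeasureTheory Metric Set Topology
open scoped ContDiff Convolution Pointwise

variable {F : Type*} [NormedAddCommGroup F] [NormedSpace ℝ F] {n : ℕ}

section Flatness

theorem frequently_deriv_eq_zero_of_frequently_eq_zero {f : ℝ → ℝ} {p : ℝ}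
    (hf : Differentiable ℝ f) (hp : ∃ᶠ x in 𝓝[≠] p, f x = 0) :
    ∃ᶠ x in 𝓝[≠] p, deriv f x = 0 := by
  have hfp : f p = 0 := (isClosed_eq hf.continuous continuous_const).mem_of_frequently_of_tendsto
    hp (tendsto_nhdsWithin_of_tendsto_nhds tendsto_id)
  rw [nhdsWithin_basis_ball.frequently_iff] at hp ⊢
  intro r hr
  obtain ⟨y, ⟨hy, hyp⟩, hfy⟩ := hp r hr
  have hball : uIcc p y ⊆ ball p r :=
    (convex_ball p r).ordConnected.uIcc_subset (mem_ball_self hr) hy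
  rcases lt_or_gt_of_ne hyp with hlt | hgt
  · obtain ⟨c, hc, hdc⟩ :=
      exists_deriv_eq_zero hlt hf.continuous.continuousOn (hfy.trans hfp.symm)
    exact ⟨c, ⟨hball (Icc_subset_uIcc' (Ioo_subset_Icc_self hc)), hc.2.ne⟩, hdc⟩
  · obtain ⟨c, hc, hdc⟩ :=
      exists_deriv_eq_zero hgt hf.continuous.continuousOn (hfp.trans hfy.symm)
    exact ⟨c, ⟨hball (Icc_subset_uIcc (Ioo_subset_Icc_self hc)), hc.1.ne'⟩, hdc⟩

theorem iteratedDeriv_eq_zero_of_frequently_eq_zero {f : ℝ → ℝ} {p : ℝ}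
    (hf : ContDiff ℝ n f) (hp : ∃ᶠ x in 𝓝[≠] p, f x = 0) {i : ℕ} (hi : i ≤ n) :
    iteratedDeriv i f p = 0 := by
  have hfreq : ∃ᶠ x in 𝓝[≠] p, iteratedDeriv i f x = 0 := by
    induction i with
    | zero => simpa only [iteratedDeriv_zero] using hp
    | succ i ih =>
      rw [iteratedDeriv_succ]
      exact frequently_deriv_eq_zero_of_frequently_eq_zero
        (hf.differentiable_iteratedDeriv i (by exact_mod_cast hi)) (ih (by omega))
  exact (isClosed_eq (hf.continuous_iteratedDeriv i (by exact_mod_cast hi))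
    continuous_const).mem_of_frequently_of_tendsto
    hfreq (tendsto_nhdsWithin_of_tendsto_nhds tendsto_id)

theorem norm_iteratedDeriv_le_of_flat {f : ℝ → F} {p r η : ℝ} (hf : ContDiff ℝ n f)
    (hflat : ∀ i < n, iteratedDeriv i f p = 0)
    (hη : ∀ y ∈ closedBall p r, ‖iteratedDeriv n f y‖ ≤ η) {i : ℕ} (hi : i ≤ n) :
    ∀ y ∈ closedBall p r, ‖iteratedDeriv i f y‖ ≤ η * r ^ (n - i) := by
  induction hi using Nat.decreasingInduction with
  | self => simpa using hη
  | of_succ k hk ih =>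
    intro y hy
    have hr : 0 ≤ r := dist_nonneg.trans hy
    have hη0 : 0 ≤ η := (norm_nonneg _).trans (hη y hy)
    have hmv := (convex_closedBall p r).norm_image_sub_le_of_norm_deriv_le (𝕜 := ℝ)
      (fun x _ => hf.differentiable_iteratedDeriv k (by exact_mod_cast hk) x)
      (fun x hx => by simpa only [iteratedDeriv_succ] using ih x hx)
      (mem_closedBall_self hr) hy
    rw [hflat k hk, sub_zero] at hmv
    calc ‖iteratedDeriv k f y‖ ≤ η * r ^ (n - (k + 1)) * ‖y - p‖ := hmv
      _ ≤ η * r ^ (n - (k + 1)) * r := by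
          gcongr
          exact mem_closedBall_iff_norm.1 hy
      _ = η * r ^ (n - k) := by
          rw [mul_assoc, ← pow_succ, show n - (k + 1) + 1 = n - k by omega]

end Flatness

section DerivsBoundedBy

/-- The closed ball of radius `c` for the `C^n` norm on `ℝ`: all derivatives of `f` of order at
most `n` are bounded by `c`. Smoothness of `f` is not included. -/
def DerivsBoundedBy (n : ℕ) (c : ℝ) (f : ℝ → F) : Prop :=
  ∀ j ≤ n, ∀ x, ‖iteratedDeriv j f x‖ ≤ c

theorem norm_iteratedDeriv_mul_le {𝕜 𝔸 : Type*} [NontriviallyNormedField 𝕜] [NormedRing 𝔸]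
    [NormedAlgebra 𝕜 𝔸] {f g : 𝕜 → 𝔸} {x : 𝕜} {c : ℝ} (hf : ContDiffAt 𝕜 n f x)
    (hg : ContDiffAt 𝕜 n g x)
    (hfg : ∀ i ≤ n, ‖iteratedDeriv i f x‖ * ‖iteratedDeriv (n - i) g x‖ ≤ c) :
    ‖iteratedDeriv n (f * g) x‖ ≤ 2 ^ n * c := by
  rw [iteratedDeriv_mul hf hg, ← Nat.cast_ofNat (R := ℝ), ← Nat.cast_pow,
    ← Nat.sum_range_choose, Nat.cast_sum, Finset.sum_mul]
  refine norm_sum_le_of_le _ fun i hi => ?_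
  rw [mul_assoc, ← nsmul_eq_mul]
  refine norm_nsmul_le.trans ?_
  gcongr
  exact (norm_mul_le _ _).trans (hfg i (Nat.lt_succ_iff.1 (Finset.mem_range.1 hi)))

namespace DerivsBoundedBy

variable {f g : ℝ → F} {c d : ℝ}

theorem mono (hf : DerivsBoundedBy n c f) (hcd : c ≤ d) : DerivsBoundedBy n d f :=
  fun j hj x => (hf j hj x).trans hcd

theorem add (hf : DerivsBoundedBy n c f) (hg : DerivsBoundedBy n d g) (hfn : ContDiff ℝ n f)
    (hgn : ContDiff ℝ n g) : DerivsBoundedBy n (c + d) (f + g) := by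
  intro j hj x
  have hjn : (j : ℕ∞ω) ≤ n := by exact_mod_cast hj
  rw [iteratedDeriv_add (hfn.of_le hjn).contDiffAt (hgn.of_le hjn).contDiffAt]
  exact norm_add_le_of_le (hf j hj x) (hg j hj x)

theorem sub (hf : DerivsBoundedBy n c f) (hg : DerivsBoundedBy n d g) (hfn : ContDiff ℝ n f)
    (hgn : ContDiff ℝ n g) : DerivsBoundedBy n (c + d) (f - g) := by
  intro j hj x
  have hjn : (j : ℕ∞ω) ≤ n := by exact_mod_cast hj
  rw [iteratedDeriv_sub (hfn.of_le hjn).contDiffAt (hgn.of_le hjn).contDiffAt]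
  exact norm_sub_le_of_le (hf j hj x) (hg j hj x)

theorem sum {ι : Type*} {s : Finset ι} {f : ι → ℝ → F} {c : ι → ℝ}
    (hf : ∀ i ∈ s, DerivsBoundedBy n (c i) (f i)) (hfn : ∀ i ∈ s, ContDiff ℝ n (f i)) :
    DerivsBoundedBy n (∑ i ∈ s, c i) (∑ i ∈ s, f i) := by
  intro j hj x
  have hjn : (j : ℕ∞ω) ≤ n := by exact_mod_cast hj
  rw [iteratedDeriv_sum fun i hi => ((hfn i hi).of_le hjn).contDiffAt]
  exact norm_sum_le_of_le _ fun i hi => hf i hi j hj x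

theorem smul_const {f : ℝ → ℝ} (hf : DerivsBoundedBy n c f) (hfn : ContDiff ℝ n f) (v : F) :
    DerivsBoundedBy n (c * ‖v‖) fun x => f x • v := by
  intro j hj x
  have hjn : (j : ℕ∞ω) ≤ n := by exact_mod_cast hj
  rw [iteratedDeriv_smul_const (hfn.of_le hjn).contDiffAt, norm_smul]
  gcongr
  exact hf j hj x

theorem mul {𝔸 : Type*} [NormedRing 𝔸] [NormedAlgebra ℝ 𝔸] {f g : ℝ → 𝔸}
    (hf : DerivsBoundedBy n c f) (hg : DerivsBoundedBy n d g) (hfn : ContDiff ℝ n f)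
    (hgn : ContDiff ℝ n g) : DerivsBoundedBy n (2 ^ n * (c * d)) (f * g) := by
  intro j hj x
  have hjn : (j : ℕ∞ω) ≤ n := by exact_mod_cast hj
  have hc : 0 ≤ c := (norm_nonneg _).trans (hf j hj x)
  have hd : 0 ≤ d := (norm_nonneg _).trans (hg j hj x)
  calc ‖iteratedDeriv j (f * g) x‖ ≤ 2 ^ j * (c * d) :=
        norm_iteratedDeriv_mul_le (hfn.of_le hjn).contDiffAt (hgn.of_le hjn).contDiffAt fun i hi =>
          mul_le_mul (hf i (hi.trans hj) x) (hg (j - i) ((Nat.sub_le j i).trans hj) x)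
            (norm_nonneg _) hc
    _ ≤ 2 ^ n * (c * d) := by
        gcongr
        norm_num

end DerivsBoundedBy

theorem hasCompactSupport_iteratedDeriv {f : ℝ → F} (hf : HasCompactSupport f) (j : ℕ) :
    HasCompactSupport (iteratedDeriv j f) := by
  induction j with
  | zero => simpa only [iteratedDeriv_zero] using hf
  | succ j ih => simpa only [iteratedDeriv_succ] using ih.deriv

theorem exists_derivsBoundedBy_of_hasCompactSupport {f : ℝ → F} (hfn : ContDiff ℝ n f)
    (hf : HasCompactSupport f) : ∃ c, DerivsBoundedBy n c f := by
  have hbound : ∀ j ≤ n, ∃ c, ∀ x, ‖iteratedDeriv j f x‖ ≤ c := fun j hj =>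
    (hasCompactSupport_iteratedDeriv hf j).exists_bound_of_continuous
      (hfn.continuous_iteratedDeriv j (by exact_mod_cast hj))
  choose! c hc using hbound
  obtain ⟨C, hC⟩ := ((finite_Iic n).image c).bddAbove
  exact ⟨C, fun j hj x => (hc j hj x).trans (hC (mem_image_of_mem c hj))⟩

end DerivsBoundedBy

section Convolution

variable {𝕜 E E' : Type*} [RCLike 𝕜] [NormedAddCommGroup E] [NormedAddCommGroup E']
  [NormedSpace 𝕜 E] [NormedSpace 𝕜 E'] [NormedSpace 𝕜 F]

theorem iteratedDeriv_convolution_right {f : 𝕜 → E} {g : 𝕜 → E'} {μ : Measure 𝕜}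
    [μ.IsAddLeftInvariant] [SFinite μ] (L : E →L[𝕜] E' →L[𝕜] F)
    (hf : LocallyIntegrable f μ) (hg : HasCompactSupport g) (hgn : ContDiff 𝕜 n g) :
    iteratedDeriv n (f ⋆[L, μ] g) = f ⋆[L, μ] iteratedDeriv n g := by
  induction n generalizing g with
  | zero => simp only [iteratedDeriv_zero]
  | succ n ih =>
    have hderiv : deriv (f ⋆[L, μ] g) = f ⋆[L, μ] deriv g := funext fun x =>
      (hg.hasDerivAt_convolution_right L hf (hgn.of_le (by exact_mod_cast n.succ_pos)) x).deriv
    rw [iteratedDeriv_succ', iteratedDeriv_succ', hderiv]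
    exact ih hg.deriv (contDiff_succ_iff_deriv.1 (by exact_mod_cast hgn)).2.2

theorem iteratedDeriv_convolution_left {f : 𝕜 → E} {g : 𝕜 → E'} {μ : Measure 𝕜}
    [μ.IsAddLeftInvariant] [SFinite μ] [μ.IsNegInvariant] (L : E →L[𝕜] E' →L[𝕜] F)
    (hf : HasCompactSupport f) (hfn : ContDiff 𝕜 n f) (hg : LocallyIntegrable g μ) :
    iteratedDeriv n (f ⋆[L, μ] g) = iteratedDeriv n f ⋆[L, μ] g := by
  rw [← convolution_flip (g := g), ← convolution_flip (g := g)]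
  exact iteratedDeriv_convolution_right L.flip hg hf hfn

theorem norm_lsmul_convolution_le {G : Type*} [AddCommGroup G] [MeasurableSpace G] {μ : Measure G}
    {k : G → ℝ} {g : G → F} {c : ℝ} (hk : Integrable k μ) (hg : ∀ x, ‖g x‖ ≤ c) (x : G) :
    ‖(k ⋆[ContinuousLinearMap.lsmul ℝ ℝ, μ] g) x‖ ≤ (∫ t, ‖k t‖ ∂μ) * c := by
  rw [← integral_mul_const]
  refine norm_integral_le_of_norm_le (hk.norm.mul_const c) (Eventually.of_forall fun t => ?_)
  rw [ContinuousLinearMap.lsmul_apply, norm_smul]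
  gcongr
  exact hg _

end Convolution

section Cutoff

theorem exists_contDiff_cutoff_thickening_one (n : ℕ) : ∃ C > 0, ∀ A : Set ℝ, ∃ ψ : ℝ → ℝ,
    ContDiff ℝ ∞ ψ ∧ (∀ x ∈ thickening 1 A, ψ x = 1) ∧ (∀ x ∉ thickening 3 A, ψ x = 0) ∧
      DerivsBoundedBy n C ψ := by
  let φ : ContDiffBump (0 : ℝ) := ⟨1 / 2, 1, by norm_num, by norm_num⟩
  let k : ℝ → ℝ := φ.normed volume
  have hk : ContDiff ℝ ∞ k := φ.contDiff_normed
  have hkc : HasCompactSupport k := φ.hasCompactSupport_normed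
  obtain ⟨C, hC⟩ := ((finite_Iic n).image fun j => ∫ t, ‖iteratedDeriv j k t‖).bddAbove
  refine ⟨max C 1, by positivity, fun A => ?_⟩
  let χ : ℝ → ℝ := (thickening 2 A).indicator 1
  have hχ : LocallyIntegrable χ :=
    (locallyIntegrable_const 1).indicator isOpen_thickening.measurableSet
  have hχ_le : ∀ x, ‖χ x‖ ≤ 1 := fun x => by
    simpa using norm_indicator_le_norm_self (s := thickening 2 A) (1 : ℝ → ℝ) x
  refine ⟨k ⋆[ContinuousLinearMap.lsmul ℝ ℝ, volume] χ, hkc.contDiff_convolution_left _ hk hχ,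
    fun x hx => ?_, fun x hx => ?_, fun j hj x => ?_⟩
  · have hball : ∀ y ∈ ball x 1, χ y = 1 := fun y hy =>
      indicator_of_mem (by
        simpa [one_add_one_eq_two] using thickening_thickening_subset 1 1 A
          (ball_subset_thickening hx 1 hy)) _
    have hχx := hball x (mem_ball_self one_pos)
    exact (φ.normed_convolution_eq_right fun y hy => (hball y hy).trans hχx.symm).trans hχx
  · have hball : ∀ y ∈ ball x 1, χ y = 0 := fun y hy =>
      indicator_of_notMem (fun hyA => hx (by
        have := thickening_thickening_subset 1 2 A
          (ball_subset_thickening hyA 1 (mem_ball_comm.1 hy))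
        rwa [show (1 : ℝ) + 2 = 3 by norm_num] at this)) _
    have hχx := hball x (mem_ball_self one_pos)
    exact (φ.normed_convolution_eq_right fun y hy => (hball y hy).trans hχx.symm).trans hχx
  · rw [iteratedDeriv_convolution_left _ hkc (hk.of_le (by exact_mod_cast le_top)) hχ]
    have hint : Integrable (iteratedDeriv j k) :=
      (hk.continuous_iteratedDeriv j (by exact_mod_cast le_top)).integrable_of_hasCompactSupport
        (hasCompactSupport_iteratedDeriv hkc j)
    calc _ ≤ (∫ t, ‖iteratedDeriv j k t‖) * 1 := norm_lsmul_convolution_le hint hχ_le x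
      _ ≤ C := by simpa using hC (mem_image_of_mem _ hj)
      _ ≤ max C 1 := le_max_left _ _

theorem smul_mem_thickening_smul_iff {𝕜 E : Type*} [NormedField 𝕜] [SeminormedAddCommGroup E]
    [NormedSpace 𝕜 E] {c : 𝕜} (hc : c ≠ 0) {A : Set E} {r : ℝ} {x : E} :
    c • x ∈ thickening (‖c‖ * r) (c • A) ↔ x ∈ thickening r A := by
  simp only [mem_thickening_iff, mem_smul_set, exists_exists_and_eq_and, dist_smul₀,
    mul_lt_mul_iff_right₀ (norm_pos_iff.2 hc)]

theorem exists_contDiff_cutoff_thickening (n : ℕ) : ∃ C > 0, ∀ A : Set ℝ, ∀ δ > 0, ∃ ψ : ℝ → ℝ,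
    ContDiff ℝ ∞ ψ ∧ (∀ x ∈ thickening δ A, ψ x = 1) ∧ (∀ x ∉ thickening (3 * δ) A, ψ x = 0) ∧
      ∀ j ≤ n, ∀ x, ‖iteratedDeriv j ψ x‖ ≤ C * δ⁻¹ ^ j := by
  obtain ⟨C, hC, hcut⟩ := exists_contDiff_cutoff_thickening_one n
  refine ⟨C, hC, fun A δ hδ => ?_⟩
  obtain ⟨ψ, hψ, hψ1, hψ0, hψC⟩ := hcut (δ⁻¹ • A)
  have hscale : ∀ r x, δ⁻¹ * x ∈ thickening r (δ⁻¹ • A) ↔ x ∈ thickening (r * δ) A := fun r x => by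
    rw [← smul_mem_thickening_smul_iff (inv_ne_zero hδ.ne') (A := A), smul_eq_mul, norm_inv,
      Real.norm_of_nonneg hδ.le, mul_comm r, inv_mul_cancel_left₀ hδ.ne']
  refine ⟨fun x => ψ (δ⁻¹ * x), hψ.comp (contDiff_const.mul contDiff_id),
    fun x hx => hψ1 _ ((hscale 1 x).2 (by rwa [one_mul])),
    fun x hx => hψ0 _ (mt (hscale 3 x).1 hx), fun j hj x => ?_⟩
  rw [iteratedDeriv_comp_const_mul (hψ.of_le (by exact_mod_cast le_top)), norm_mul, norm_pow,
    norm_inv, Real.norm_of_nonneg hδ.le, mul_comm]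
  gcongr
  exact hψC j hj _

theorem norm_iteratedDeriv_cutoff_mul_le {f ψ : ℝ → ℝ} {p δ C η x : ℝ} (hf : ContDiff ℝ n f)
    (hψ : ContDiff ℝ n ψ) (hflat : ∀ i < n, iteratedDeriv i f p = 0)
    (hη : ∀ y ∈ closedBall p (4 * δ), ‖iteratedDeriv n f y‖ ≤ η) (hδ : 0 < δ) (hδ1 : δ ≤ 1)
    (hψC : ∀ j ≤ n, ‖iteratedDeriv j ψ x‖ ≤ C * δ⁻¹ ^ j) (hx : x ∈ closedBall p (4 * δ))
    {j : ℕ} (hj : j ≤ n) : ‖iteratedDeriv j (ψ * f) x‖ ≤ 2 ^ n * (C * (η * 4 ^ n)) := by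
  have hjn : (j : ℕ∞ω) ≤ n := by exact_mod_cast hj
  have hC : 0 ≤ C := by simpa using (norm_nonneg _).trans (hψC 0 n.zero_le)
  have hη0 : 0 ≤ η := (norm_nonneg _).trans (hη x hx)
  have hterm : ∀ i ≤ j, ‖iteratedDeriv i ψ x‖ * ‖iteratedDeriv (j - i) f x‖ ≤
      C * (η * 4 ^ n) := by
    intro i hi
    obtain ⟨d, hd⟩ : ∃ d, n - (j - i) = i + d := ⟨n - j, by omega⟩
    calc ‖iteratedDeriv i ψ x‖ * ‖iteratedDeriv (j - i) f x‖
        ≤ C * δ⁻¹ ^ i * (η * (4 * δ) ^ (n - (j - i))) := by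
          gcongr
          · exact hψC i (hi.trans hj)
          · exact norm_iteratedDeriv_le_of_flat hf hflat hη (by omega) x hx
      _ = C * (η * (4 ^ (i + d) * δ ^ d)) := by
          rw [hd, mul_pow, pow_add δ, inv_pow]
          field_simp
      _ ≤ C * (η * (4 ^ n * 1)) := by
          gcongr
          · norm_num
          · omega
          · exact pow_le_one₀ hδ.le hδ1
      _ = C * (η * 4 ^ n) := by rw [mul_one]
  calc ‖iteratedDeriv j (ψ * f) x‖ ≤ 2 ^ j * (C * (η * 4 ^ n)) :=
        norm_iteratedDeriv_mul_le (hψ.of_le hjn).contDiffAt (hf.of_le hjn).contDiffAt hterm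
    _ ≤ 2 ^ n * (C * (η * 4 ^ n)) := by
        gcongr
        norm_num

theorem exists_cutoff_mul_derivsBoundedBy {f : ℝ → ℝ} {A : Set ℝ} {ε : ℝ} (hf : ContDiff ℝ n f)
    (huc : UniformContinuous (iteratedDeriv n f))
    (hflat : ∀ p ∈ A, ∀ i ≤ n, iteratedDeriv i f p = 0) (hε : 0 < ε) :
    ∃ ψ : ℝ → ℝ, ContDiff ℝ ∞ ψ ∧ (∃ δ > 0, ∀ x ∈ thickening δ A, ψ x = 1) ∧
      (∃ C, DerivsBoundedBy n C ψ) ∧ DerivsBoundedBy n ε (ψ * f) := by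
  obtain ⟨C, hC, hcut⟩ := exists_contDiff_cutoff_thickening n
  let η : ℝ := ε / (2 ^ n * (C * 4 ^ n))
  obtain ⟨ρ, hρ, hρη⟩ := Metric.uniformContinuous_iff.1 huc η (by positivity)
  obtain ⟨δ, hδ, hδ_lt⟩ := exists_between (show 0 < min 1 (ρ / 4) by positivity)
  have hδ1 : δ ≤ 1 := (hδ_lt.trans_le (min_le_left _ _)).le
  have hδρ : 4 * δ < ρ := by linarith [hδ_lt.trans_le (min_le_right _ _)]
  obtain ⟨ψ, hψ, hψ1, hψ0, hψC⟩ := hcut A δ hδ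
  refine ⟨ψ, hψ, ⟨δ, hδ, hψ1⟩, ⟨C * δ⁻¹ ^ n, fun j hj x => (hψC j hj x).trans ?_⟩,
    fun j hj x => ?_⟩
  · gcongr
    exact (one_le_inv₀ hδ).2 hδ1
  by_cases hx : x ∈ thickening (4 * δ) A
  · obtain ⟨p, hp, hxp⟩ := mem_thickening_iff.1 hx
    have hη : ∀ y ∈ closedBall p (4 * δ), ‖iteratedDeriv n f y‖ ≤ η := fun y hy => by
      simpa only [hflat p hp n le_rfl, dist_zero_right] using
        (hρη ((mem_closedBall.1 hy).trans_lt hδρ)).le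
    calc ‖iteratedDeriv j (ψ * f) x‖ ≤ 2 ^ n * (C * (η * 4 ^ n)) :=
          norm_iteratedDeriv_cutoff_mul_le hf (hψ.of_le (by exact_mod_cast le_top))
            (fun i hi => hflat p hp i hi.le) hη hδ hδ1 (fun i hi => hψC i hi x) hxp.le hj
      _ = ε := by
          simp only [η]
          field_simp
  · have hzero : ψ * f =ᶠ[𝓝 x] 0 := by
      filter_upwards [ball_mem_nhds x hδ] with y hy
      have hyA : y ∉ thickening (3 * δ) A := fun hyA => hx <| by
        have := thickening_thickening_subset δ (3 * δ) A
          (ball_subset_thickening hyA δ (mem_ball_comm.1 hy))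
        rwa [show δ + 3 * δ = 4 * δ by ring] at this
      simp [hψ0 y hyA]
    rw [hzero.iteratedDeriv_eq]
    simpa [Pi.zero_def, iteratedDeriv_const] using hε.le

end Cutoff

section Approximation

theorem exists_contDiff_derivsBoundedBy_sub [CompleteSpace F] {f : ℝ → F} {ε : ℝ}
    (hf : ContDiff ℝ n f) (hfc : HasCompactSupport f) (hε : 0 < ε) :
    ∃ g : ℝ → F, ContDiff ℝ ∞ g ∧ DerivsBoundedBy n ε (f - g) := by
  have huc : UniformContinuous fun x (j : Fin (n + 1)) => iteratedDeriv j f x :=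
    uniformContinuous_pi.2 fun j =>
      (hasCompactSupport_iteratedDeriv hfc j).uniformContinuous_of_continuous
        (hf.continuous_iteratedDeriv j (by exact_mod_cast j.is_le))
  obtain ⟨δ, hδ, hδε⟩ := Metric.uniformContinuous_iff.1 huc ε hε
  let φ : ContDiffBump (0 : ℝ) := ⟨δ / 2, δ, half_pos hδ, half_lt_self hδ⟩
  have hg : ContDiff ℝ ∞ (φ.normed volume ⋆[ContinuousLinearMap.lsmul ℝ ℝ, volume] f) :=
    φ.hasCompactSupport_normed.contDiff_convolution_left _ φ.contDiff_normed
      hf.continuous.locallyIntegrable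
  refine ⟨_, hg, fun j hj x => ?_⟩
  have hjn : (j : ℕ∞ω) ≤ n := by exact_mod_cast hj
  rw [iteratedDeriv_sub (hf.of_le hjn).contDiffAt
      (hg.of_le (by exact_mod_cast le_top)).contDiffAt,
    iteratedDeriv_convolution_right _ φ.continuous_normed.locallyIntegrable hfc (hf.of_le hjn),
    ← dist_eq_norm, dist_comm]
  refine φ.dist_normed_convolution_le (hf.continuous_iteratedDeriv j hjn).aestronglyMeasurable
    fun y hy => ?_
  exact (dist_le_pi_dist _ _ (⟨j, Nat.lt_succ_of_le hj⟩ : Fin (n + 1))).trans (hδε hy).le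

theorem exists_contDiff_bump_eq_zero_on_finset {E : Type*} [NormedAddCommGroup E]
    [NormedSpace ℝ E] [FiniteDimensional ℝ E] (T : Finset E) (t : E) : ∃ b : E → ℝ,
      ContDiff ℝ ∞ b ∧ HasCompactSupport b ∧ b t = 1 ∧ ∀ s ∈ T, s ≠ t → b s = 0 := by
  have hnhds : ((T : Set E) \ {t})ᶜ ∈ 𝓝 t :=
    (T.finite_toSet.sdiff).isClosed.isOpen_compl.mem_nhds fun h => h.2 rfl
  obtain ⟨b, hbsupp, hbc, hb, -, hbt⟩ := exists_contDiff_tsupport_subset (n := ⊤) hnhds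
  exact ⟨b, hb, hbc, hbt, fun s hs hst =>
    image_eq_zero_of_notMem_tsupport fun h => hbsupp h ⟨hs, hst⟩⟩

theorem exists_contDiff_derivsBoundedBy_sub_eqOn [CompleteSpace F] {f : ℝ → F} {ε : ℝ}
    (hf : ContDiff ℝ n f) (hfc : HasCompactSupport f) (T : Finset ℝ) (hε : 0 < ε) :
    ∃ g : ℝ → F, ContDiff ℝ ∞ g ∧ EqOn g f T ∧ DerivsBoundedBy n ε (f - g) := by
  choose b hb hbc hb1 hb0 using exists_contDiff_bump_eq_zero_on_finset T
  have hbn : ∀ t, ContDiff ℝ n (b t) := fun t => (hb t).of_le (by exact_mod_cast le_top)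
  choose c hc using fun t => exists_derivsBoundedBy_of_hasCompactSupport (hbn t) (hbc t)
  have hc0 : ∀ t, 0 ≤ c t := fun t => (norm_nonneg _).trans (hc t 0 n.zero_le 0)
  let S : ℝ := ∑ t ∈ T, c t
  have hS : 0 ≤ S := Finset.sum_nonneg fun t _ => hc0 t
  obtain ⟨g, hg, hfg⟩ := exists_contDiff_derivsBoundedBy_sub hf hfc
    (show 0 < ε / (1 + S) by positivity)
  let corr : ℝ → F := ∑ t ∈ T, fun x => b t x • (f t - g t)
  have hterm : ∀ t, ContDiff ℝ ∞ fun x => b t x • (f t - g t) := fun t =>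
    (hb t).smul contDiff_const
  have hcorr : ContDiff ℝ ∞ corr := by
    simpa only [corr, Finset.sum_fn] using ContDiff.sum fun t _ => hterm t
  refine ⟨g + corr, hg.add hcorr, fun s hs => ?_, ?_⟩
  · have hcorr_s : corr s = f s - g s := by
      simp only [corr, Finset.sum_apply]
      rw [Finset.sum_eq_single_of_mem s hs fun t _ hts => by rw [hb0 t s hs hts.symm, zero_smul],
        hb1, one_smul]
    simp [hcorr_s]
  · have hcorr_le : DerivsBoundedBy n (∑ t ∈ T, c t * ‖f t - g t‖) corr :=
      .sum (fun t _ => (hc t).smul_const (hbn t) _) fun t _ => (hbn t).smul contDiff_const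
    rw [← sub_sub]
    refine (hfg.sub hcorr_le (hf.sub (hg.of_le (by exact_mod_cast le_top)))
      (hcorr.of_le (by exact_mod_cast le_top))).mono ?_
    calc ε / (1 + S) + ∑ t ∈ T, c t * ‖f t - g t‖
        ≤ ε / (1 + S) + ∑ t ∈ T, c t * (ε / (1 + S)) := by
          gcongr with t
          · exact hc0 t
          · simpa using hfg 0 n.zero_le t
      _ = ε := by
          rw [← Finset.sum_mul]
          field_simp
          simp [S]

end Approximation

section Zeros

theorem finite_sdiff_of_derivedSet_subset {X : Type*} [TopologicalSpace X] {S U V : Set X}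
    (hU : IsOpen U) (hSU : derivedSet S ⊆ U) (hV : IsCompact V) (hSV : S \ U ⊆ V) :
    (S \ U).Finite := by
  by_contra hinf
  obtain ⟨p, -, hp⟩ := Set.Infinite.exists_accPt_of_subset_isCompact hinf hV hSV
  have hpU : p ∈ Uᶜ := hU.isClosed_compl.closure_subset_iff.2 (fun _ h => h.2)
    (derivedSet_subset_closure _ hp)
  exact hpU (hSU (hp.mono (principal_mono.2 sdiff_subset)))

theorem compl_tsupport_subset_derivedSet {M : Type*} [Zero M] {f : ℝ → M} :
    (tsupport f)ᶜ ⊆ derivedSet {x | f x = 0} := fun x hx => by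
  rw [mem_derivedSet, accPt_iff_frequently_nhdsNE]
  exact ((notMem_tsupport_iff_eventuallyEq.1 hx).filter_mono nhdsWithin_le_nhds).frequently

theorem exists_contDiff_eq_zero_derivsBoundedBy_sub {f : ℝ → ℝ} {ε : ℝ} (hf : ContDiff ℝ n f)
    (hfc : HasCompactSupport f) (hε : 0 < ε) :
    ∃ g : ℝ → ℝ, ContDiff ℝ ∞ g ∧ (∀ x, f x = 0 → g x = 0) ∧ DerivsBoundedBy n ε (f - g) := by
  have hflat : ∀ p ∈ derivedSet {x | f x = 0}, ∀ i ≤ n, iteratedDeriv i f p = 0 :=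
    fun p hp i hi =>
      iteratedDeriv_eq_zero_of_frequently_eq_zero hf (accPt_iff_frequently_nhdsNE.1 hp) hi
  have huc : UniformContinuous (iteratedDeriv n f) :=
    (hasCompactSupport_iteratedDeriv hfc n).uniformContinuous_of_continuous
      (hf.continuous_iteratedDeriv n le_rfl)
  obtain ⟨ψ, hψ, ⟨δ, hδ, hψ1⟩, ⟨C, hψC⟩, hψf⟩ :=
    exists_cutoff_mul_derivsBoundedBy hf huc hflat (half_pos hε)
  have hC : 0 ≤ C := (norm_nonneg _).trans (hψC 0 n.zero_le 0)
  let U : Set ℝ := thickening δ (derivedSet {x | f x = 0})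
  have hAU : derivedSet {x | f x = 0} ⊆ U := self_subset_thickening hδ _
  have hfin : ({x | f x = 0} \ U).Finite :=
    finite_sdiff_of_derivedSet_subset isOpen_thickening hAU hfc fun x hx =>
      by_contra fun h => hx.2 (hAU (compl_tsupport_subset_derivedSet h))
  obtain ⟨Q, hQ, hQf, hfQ⟩ := exists_contDiff_derivsBoundedBy_sub_eqOn hf hfc hfin.toFinset
    (show 0 < ε / 2 / (1 + 2 ^ n * C) by positivity)
  refine ⟨(1 - ψ) * Q, (contDiff_const.sub hψ).mul hQ, fun x hx => ?_, ?_⟩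
  · by_cases hxU : x ∈ U
    · simp [hψ1 x hxU]
    · have hQx : Q x = 0 := (hQf (by simpa using ⟨hx, hxU⟩)).trans hx
      simp [hQx]
  · have hψn : ContDiff ℝ n ψ := hψ.of_le (by exact_mod_cast le_top)
    have hfQn : ContDiff ℝ n (f - Q) := hf.sub (hQ.of_le (by exact_mod_cast le_top))
    rw [show f - (1 - ψ) * Q = ψ * f + ((f - Q) - ψ * (f - Q)) by ring]
    refine (hψf.add (hfQ.sub (hψC.mul hfQ hψn hfQn) hfQn (hψn.mul hfQn)) (hψn.mul hf)
      (hfQn.sub (hψn.mul hfQn))).mono (le_of_eq ?_)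
    field_simp
    ring

end Zeros

theorem stmt_17_general (K : Set ℝ) (n : ℕ) (f : ℝ → ℝ) (hf : ContDiff ℝ n f)
    (hfK : ∀ x ∈ K, f x = 0) (R ε : ℝ) (hε : 0 < ε) :
    ∃ g : ℝ → ℝ, ContDiff ℝ ∞ g ∧ (∀ x ∈ K, g x = 0) ∧
      ∀ j ≤ n, ∀ x : ℝ, |x| ≤ R → |iteratedDeriv j f x - iteratedDeriv j g x| < ε := by
  let b : ContDiffBump (0 : ℝ) := ⟨|R| + 1, |R| + 2, by positivity, by linarith⟩
  have hbf : ContDiff ℝ n (⇑b * f) := b.contDiff.mul hf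
  obtain ⟨g, hg, hg0, hfg⟩ := exists_contDiff_eq_zero_derivsBoundedBy_sub hbf
    (b.hasCompactSupport.mul_right) (half_pos hε)
  refine ⟨g, hg, fun x hx => hg0 x (by simp [hfK x hx]), fun j hj x hx => ?_⟩
  have hjn : (j : ℕ∞ω) ≤ n := by exact_mod_cast hj
  have hloc : f =ᶠ[𝓝 x] ⇑b * f := by
    have hxb : x ∈ ball 0 b.rIn := by
      rw [mem_ball_zero_iff]
      exact (hx.trans (le_abs_self R)).trans_lt (lt_add_one _)
    filter_upwards [b.eventuallyEq_one_of_mem_ball hxb] with y hy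
    simp [hy]
  rw [hloc.iteratedDeriv_eq, ← iteratedDeriv_sub (hbf.of_le hjn).contDiffAt
    (hg.of_le (by exact_mod_cast le_top)).contDiffAt]
  exact (hfg j hj x).trans_lt (half_lt_self hε)

/-- Reducedness of the spectrum of vanishing ideals: if `K ⊆ ℝ`, `n ∈ ℕ`, and
`f ∈ C^(2n+1)(ℝ)` vanishes on `K`, then for every `ε > 0` there is `g ∈ C^∞(ℝ)`
vanishing on `K` with `sup_{j ≤ n, |x| ≤ n} |f^{(j)} x - g^{(j)} x| < ε`. -/
theorem stmt_17 (K : Set ℝ) (n : ℕ) (f : ℝ → ℝ)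
    (hf : ContDiff ℝ ((2 * n + 1 : ℕ) : ℕ∞) f) (hfK : ∀ x ∈ K, f x = 0) :
    ∀ ε : ℝ, 0 < ε → ∃ g : ℝ → ℝ, ContDiff ℝ (⊤ : ℕ∞) g ∧ (∀ x ∈ K, g x = 0) ∧
      ∀ j ≤ n, ∀ x : ℝ, |x| ≤ (n : ℝ) →
        |iteratedDeriv j f x - iteratedDeriv j g x| < ε :=
  stmt_17_general K n f (hf.of_le (by exact_mod_cast (by omega))) hfK n
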